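/- The characteristic polynomial of u = u_β·u_α satisfies det(λI − u) = (λ − 1) · Π_{n=1}^{k} (λ² − 2λ cos φ_n + 1), where cos φ_n = 1 − 2n(N − n + 1)/((r+1)(N−r)). -/

import Mathlib

open Polynomial

/-- The index set of the reduced `(2k+1)`-dimensional space. -/
def Idx (k : ℕ) := {q : Fin (k + 1) × Fin 2 // ¬((q.1 : ℕ) = k ∧ (q.2 : ℕ) = 1)}

instance (k : ℕ) : Fintype (Idx k) := Subtype.fintype _
instance (k : ℕ) : DecidableEq (Idx k) := Subtype.instDecidableEq

/-- The `(2k+1)×(2k+1)` matrix `u_α`. -/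
noncomputable def uAlpha (N r k : ℕ) : Matrix (Idx k) (Idx k) ℝ :=
  fun q' q =>
    (-1 : ℝ) ^ (q.val.2 : ℕ)
        * (1 - 2 * ((k : ℝ) - (q.val.1 : ℕ)) / ((N : ℝ) - r))
        * (if q.val.1 = q'.val.1 ∧ q.val.2 = q'.val.2 then 1 else 0)
      + 2 * Real.sqrt (((k : ℝ) - (q.val.1 : ℕ)) / ((N : ℝ) - r))
          * Real.sqrt (1 - ((k : ℝ) - (q.val.1 : ℕ)) / ((N : ℝ) - r))
          * (if q.val.1 = q'.val.1 ∧ 1 - (q.val.2 : ℕ) = (q'.val.2 : ℕ) then 1 else 0)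

/-- The `(2k+1)×(2k+1)` matrix `u_β`. -/
noncomputable def uBeta (r k : ℕ) : Matrix (Idx k) (Idx k) ℝ :=
  fun q' q =>
    (-1 : ℝ) ^ (q.val.2 : ℕ)
        * (1 - 2 * (((q.val.1 : ℕ) : ℝ) + (q.val.2 : ℕ)) / ((r : ℝ) + 1))
        * (if q.val.1 = q'.val.1 ∧ q.val.2 = q'.val.2 then 1 else 0)
      + 2 * Real.sqrt ((((q.val.1 : ℕ) : ℝ) + (q.val.2 : ℕ)) / ((r : ℝ) + 1))
          * Real.sqrt (1 - (((q.val.1 : ℕ) : ℝ) + (q.val.2 : ℕ)) / ((r : ℝ) + 1))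
          * (if ((q.val.1 : ℕ) : ℤ) - (-1 : ℤ) ^ (q.val.2 : ℕ) = ((q'.val.1 : ℕ) : ℤ)
                ∧ 1 - (q.val.2 : ℕ) = (q'.val.2 : ℕ) then 1 else 0)

/-!
In the coordinates of `idxEquiv`, both matrices are reflections: `u_α = 1 - 2VVᵀ` and
`u_β = 1 - 2WWᵀ`, where `V` and `W` have `k` orthonormal columns in dimension `2k + 1`. The
Weinstein–Aronszajn identity and a Schur complement reduce the characteristic polynomial of
`u_β u_α` to `(λ - 1) det ((λ + 1)² - 4λ MᵀM)` with the bidiagonal overlap matrix `M = WᵀV`.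
The entries of `M` are square roots, but conjugation by a diagonal matrix turns `MᵀM` into a product
of two bidiagonal difference operators with linear coefficients. In the Newton basis
`i ↦ i.choose m` the first is diagonal and the second triangular, so with `R = r + 1` and
`S = N - r` the eigenvalues of `MᵀM` are `(R - 1 - m)(S - 1 - m) / (RS) = (1 + cos φ_{m+1}) / 2`.
-/

section Reflections

open Matrix

variable {R : Type*} [CommRing R] {m n : Type*} [Fintype m] [DecidableEq n]

/-- The reflection `1 - 2P` of the projection `P = W * W'`. It is only meant for factorizations
with `W' * W = 1`, which make `P` idempotent; an orthogonal projection has `W' = Wᵀ`. -/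
def projReflection (W : Matrix n m R) (W' : Matrix m n R) : Matrix n n R :=
  1 - (2 : R) • (W * W')

theorem projReflection_map {S : Type*} [CommRing S] (f : R →+* S) (W : Matrix n m R)
    (W' : Matrix m n R) :
    (projReflection W W').map f = projReflection (W.map f) (W'.map f) := by
  ext i j
  simp [projReflection, ← Matrix.map_mul, one_apply, apply_ite f, map_ofNat]

variable [Fintype n] [DecidableEq m]

theorem pow_card_mul_det_smul_one_sub_mul_comm (c : R) (A : Matrix n m R) (B : Matrix m n R) :
    c ^ Fintype.card m * (c • 1 - A * B).det = c ^ Fintype.card n * (c • 1 - B * A).det := by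
  simpa [eval_charpoly, smul_one_eq_diagonal, ← scalar_apply] using
    congrArg (eval c) (charpoly_mul_comm' A B)

theorem det_fromBlocks_smul_one_smul_one {c : R} (hc : IsLeftRegular c) (B C : Matrix m m R) :
    (fromBlocks (c • 1) B C (c • 1)).det = (c ^ 2 • 1 - C * B).det := by
  have elimination : fromBlocks (c • 1) B C (c • 1) * fromBlocks 1 (-B) 0 (c • 1)
      = fromBlocks (c • 1) 0 C (c ^ 2 • 1 - C * B) := by
    simp [fromBlocks_multiply, smul_smul, sq, sub_eq_neg_add]
  have h := congrArg det elimination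
  rw [det_mul, det_fromBlocks_zero₂₁, det_fromBlocks_zero₁₂, det_one, one_mul, mul_comm,
    det_smul, det_one, mul_one] at h
  exact hc.pow _ h

variable {V W : Matrix n m R} {V' W' : Matrix m n R}

theorem projReflection_mul_self (hW : W' * W = 1) :
    projReflection W W' * projReflection W W' = 1 := by
  have idempotent : W * W' * (W * W') = W * W' := by
    rw [Matrix.mul_assoc, ← Matrix.mul_assoc W', hW, Matrix.one_mul]
  simp only [projReflection, Matrix.mul_sub, Matrix.sub_mul, Matrix.smul_mul, Matrix.mul_smul,
    idempotent, Matrix.one_mul, Matrix.mul_one]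
  module

theorem det_projReflection (hW : W' * W = 1) :
    (projReflection W W').det = (-1) ^ Fintype.card m := by
  have h : (1 : Matrix m m R) - W' * ((2 : R) • W) = -1 := by
    rw [Matrix.mul_smul, hW]
    module
  rw [projReflection, ← Matrix.smul_mul, det_one_sub_mul_comm, h, det_neg, det_one, mul_one]

theorem det_smul_projReflection_sub_projReflection (hV : V' * V = 1) (hW : W' * W = 1) {x : R}
    (hx : IsLeftRegular (x + 1)) :
    (x - 1) ^ (2 * Fintype.card m) * (x • projReflection W W' - projReflection V V').det
      = (-1) ^ Fintype.card m * ((x - 1) ^ Fintype.card n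
        * ((x + 1) ^ 2 • 1 - (4 * x) • (V' * W * (W' * V))).det) := by
  have low_rank : x • projReflection W W' - projReflection V V'
      = (x - 1) • 1 - fromCols W V * fromRows ((2 * x) • W') (-(2 : R) • V') := by
    rw [projReflection, projReflection, fromCols_mul_fromRows, Matrix.mul_smul, Matrix.mul_smul]
    module
  have swapped : (x - 1) • 1 - fromRows ((2 * x) • W') (-(2 : R) • V') * fromCols W V
      = fromBlocks (-1) 0 0 1
        * fromBlocks ((x + 1) • 1) ((2 * x) • (W' * V)) ((2 : R) • (V' * W)) ((x + 1) • 1) := by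
    rw [fromRows_mul_fromCols, ← fromBlocks_one, fromBlocks_smul, sub_eq_add_neg, fromBlocks_neg,
      fromBlocks_add, fromBlocks_multiply]
    simp only [Matrix.smul_mul, hV, hW]
    congr 1 <;>
      simp only [Matrix.neg_mul, Matrix.one_mul, Matrix.zero_mul, add_zero, zero_add] <;> module
  rw [low_rank, two_mul, ← Fintype.card_sum, pow_card_mul_det_smul_one_sub_mul_comm,
    swapped, det_mul, det_fromBlocks_zero₂₁, det_fromBlocks_smul_one_smul_one hx]
  simp only [det_neg, det_one, Matrix.smul_mul, Matrix.mul_smul, smul_smul]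
  ring_nf

theorem det_smul_one_sub_projReflection_mul (hV : V' * V = 1) (hW : W' * W = 1) {x : R}
    (hx : IsLeftRegular (x + 1)) :
    (x - 1) ^ (2 * Fintype.card m)
        * (x • 1 - projReflection W W' * projReflection V V').det
      = (x - 1) ^ Fintype.card n
        * ((x + 1) ^ 2 • 1 - (4 * x) • (V' * W * (W' * V))).det := by
  have factored : x • 1 - projReflection W W' * projReflection V V'
      = projReflection W W' * (x • projReflection W W' - projReflection V V') := by
    rw [Matrix.mul_sub, Matrix.mul_smul, projReflection_mul_self hW]
  rw [factored, det_mul, det_projReflection hW, mul_left_comm,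
    det_smul_projReflection_sub_projReflection hV hW hx, ← mul_assoc, ← mul_pow, neg_one_mul,
    neg_neg, one_pow, one_mul]

theorem charpoly_projReflection_mul (hV : V' * V = 1) (hW : W' * W = 1) {d : ℕ}
    (hn : Fintype.card n = 2 * Fintype.card m + d) :
    (projReflection W W' * projReflection V V').charpoly
      = (X - 1) ^ d
        * ((X + 1 : R[X]) ^ 2 • 1 - (4 * X : R[X]) • (V' * W * (W' * V)).map C).det := by
  have map_C {A : Matrix n m R} {A' : Matrix m n R} (h : A' * A = 1) :
      A'.map (C : R →+* R[X]) * A.map C = 1 := by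
    rw [← Matrix.map_mul, h, Matrix.map_one _ (map_zero _) (map_one _)]
  have regular_sub : IsLeftRegular (X - 1 : R[X]) := (monic_X_sub_C (1 : R)).isRegular.left
  have regular_add : IsLeftRegular (X + 1 : R[X]) := (monic_X_add_C (1 : R)).isRegular.left
  have h := det_smul_one_sub_projReflection_mul (map_C hV) (map_C hW) regular_add
  rw [hn, pow_add, mul_assoc] at h
  rw [Matrix.charpoly, charmatrix, RingHom.mapMatrix_apply, Matrix.map_mul, projReflection_map,
    projReflection_map, scalar_apply, ← smul_one_eq_diagonal]
  simpa only [Matrix.map_mul] using regular_sub.pow _ h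

end Reflections

section Triangularization

open Matrix

variable {R : Type*} [CommRing R] [IsDomain R] {m : Type*} [Fintype m] [LinearOrder m]

theorem det_smul_one_sub_smul_map_C_of_mul_eq {G Q T : Matrix m m R}
    (hGQ : G * Q = Q * T) (hQ : Q.det ≠ 0) (hT : T.IsUpperTriangular) (a b : R[X]) :
    (a • 1 - b • G.map C).det = ∏ i, (a - b * C (T i i)) := by
  have conjugate : (a • 1 - b • G.map C) * Q.map C = Q.map C * (a • 1 - b • T.map C) := by
    simp only [Matrix.sub_mul, Matrix.mul_sub, Matrix.smul_mul, Matrix.mul_smul, Matrix.one_mul,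
      Matrix.mul_one, ← Matrix.map_mul, hGQ]
  have det_map_ne_zero : (Q.map C).det ≠ 0 := by
    rw [← RingHom.mapMatrix_apply, ← RingHom.map_det]
    exact C_ne_zero.mpr hQ
  have det_eq : (a • 1 - b • G.map C).det = (a • 1 - b • T.map C).det := by
    have h := congrArg det conjugate
    rw [det_mul, det_mul, mul_comm] at h
    exact mul_left_cancel₀ det_map_ne_zero h
  rw [det_eq, det_of_isUpperTriangular]
  · simp
  · intro i j hji
    have hne : i ≠ j := ne_of_gt hji
    simp [hT hji, hne]

end Triangularization

section Bidiagonal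

open Matrix

variable {R : Type*} {k : ℕ}

/-- The upper bidiagonal `k × k` matrix with diagonal entries `d i` and superdiagonal entries
`u i` in position `(i, i + 1)`. The sequences are indexed by `ℕ`, and only the `d i` with `i < k`
and the `u i` with `i + 1 < k` occur. -/
def upperBidiagonal [Zero R] (k : ℕ) (d u : ℕ → R) : Matrix (Fin k) (Fin k) R :=
  of fun i j => if j = i then d i else if (j : ℕ) = i + 1 then u i else 0

theorem upperBidiagonal_congr [Zero R] {d d' u u' : ℕ → R} (hd : ∀ i < k, d i = d' i)
    (hu : ∀ i, i + 1 < k → u i = u' i) : upperBidiagonal k d u = upperBidiagonal k d' u' := by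
  ext i j
  simp only [upperBidiagonal, of_apply]
  split_ifs with _ h
  · exact hd i i.2
  · exact hu i (h ▸ j.2)
  · rfl

theorem upperBidiagonal_isUpperTriangular [Zero R] (d u : ℕ → R) :
    (upperBidiagonal k d u).IsUpperTriangular := by
  intro i j hji
  have hji : (j : ℕ) < i := hji
  simp only [upperBidiagonal, of_apply]
  rw [if_neg (by omega), if_neg (by omega)]

section Semiring

variable [Semiring R]

theorem smul_upperBidiagonal (c : R) (d u : ℕ → R) :
    c • upperBidiagonal k d u = upperBidiagonal k (fun i => c * d i) (fun i => c * u i) := by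
  ext i j
  simp only [upperBidiagonal, Matrix.smul_apply, of_apply, smul_eq_mul, mul_ite, mul_zero]

theorem diagonal_mul_upperBidiagonal (f d u : ℕ → R) :
    diagonal (fun i : Fin k => f i) * upperBidiagonal k d u
      = upperBidiagonal k (fun i => f i * d i) (fun i => f i * u i) := by
  ext i j
  simp only [upperBidiagonal, diagonal_mul, of_apply, mul_ite, mul_zero]

theorem upperBidiagonal_mul_diagonal (d u e : ℕ → R) :
    upperBidiagonal k d u * diagonal (fun i : Fin k => e i)
      = upperBidiagonal k (fun i => d i * e i) (fun i => u i * e (i + 1)) := by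
  ext i j
  simp only [upperBidiagonal, mul_diagonal, of_apply, ite_mul, zero_mul]
  split_ifs with h h' <;> simp [*]

theorem upperBidiagonal_mul_diagonal_eq_diagonal_mul {d u d' u' e f : ℕ → R}
    (hd : ∀ i < k, d i * e i = f i * d' i) (hu : ∀ i, i + 1 < k → u i * e (i + 1) = f i * u' i) :
    upperBidiagonal k d u * diagonal (fun i : Fin k => e i)
      = diagonal (fun i : Fin k => f i) * upperBidiagonal k d' u' := by
  rw [upperBidiagonal_mul_diagonal, diagonal_mul_upperBidiagonal]
  exact upperBidiagonal_congr hd hu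

theorem upperBidiagonal_mul_apply {ι : Type*} {d u : ℕ → R} (hu : ∀ i, i + 1 = k → u i = 0)
    {A : Matrix (Fin k) ι R} {f : ℕ → ι → R} (hA : ∀ (i : Fin k) (j : ι), A i j = f i j)
    (i : Fin k) (j : ι) :
    (upperBidiagonal k d u * A) i j = d i * f i j + u i * f (i + 1) j := by
  simp only [mul_apply, upperBidiagonal, of_apply, hA]
  rcases (show (i : ℕ) + 1 ≤ k from i.2).lt_or_eq with hi | hi
  · have hne : i ≠ ⟨i + 1, hi⟩ := fun h => by simpa using congrArg Fin.val h
    rw [Fintype.sum_eq_add i ⟨i + 1, hi⟩ hne]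
    · simp [hne.symm]
    · rintro l ⟨hl, hl'⟩
      rw [if_neg hl, if_neg (fun h => hl' (Fin.ext h)), zero_mul]
  · rw [Fintype.sum_eq_single i, hu i hi]
    · simp
    · intro l hl
      rw [if_neg hl, if_neg (by omega), zero_mul]

theorem mul_upperBidiagonal_apply_zero {ι : Type*} (A : Matrix ι (Fin (k + 1)) R) (d u : ℕ → R)
    (i : ι) : (A * upperBidiagonal (k + 1) d u) i 0 = A i 0 * d 0 := by
  simp only [mul_apply, upperBidiagonal, of_apply]
  rw [Fintype.sum_eq_single 0]
  · simp
  · intro l hl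
    simp [hl.symm]

theorem mul_upperBidiagonal_apply_succ {ι : Type*} (A : Matrix ι (Fin (k + 1)) R) (d u : ℕ → R)
    (i : ι) (j : Fin k) :
    (A * upperBidiagonal (k + 1) d u) i j.succ
      = A i j.succ * d (j + 1) + A i j.castSucc * u j := by
  simp only [mul_apply, upperBidiagonal, of_apply]
  rw [Fintype.sum_eq_add j.succ j.castSucc j.castSucc_lt_succ.ne']
  · simp [j.castSucc_lt_succ.ne']
  · rintro l ⟨hl, hl'⟩
    have hval : (j : ℕ) ≠ l := fun h => hl' (Fin.ext h.symm)
    simp [hl.symm, hval]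

end Semiring

/-- The matrix of binomial coefficients `i.choose j`. Its columns are the Newton polynomials in `i`,
a basis in which bidiagonal difference operators with linear coefficients become triangular. -/
def pascalMatrix (R : Type*) [Semiring R] (k : ℕ) : Matrix (Fin k) (Fin k) R :=
  of fun i j => ((i : ℕ).choose j : R)

variable [CommRing R]

theorem natCast_choose_succ_mul (i j : ℕ) :
    (i.choose (j + 1) : R) * (j + 1) = i.choose j * (i - j) := by
  rcases le_or_gt j i with h | h
  · have := congrArg (Nat.cast (R := R)) (Nat.choose_succ_right_eq i j)
    push_cast [h] at this
    exact this
  · simp [Nat.choose_eq_zero_of_lt h, Nat.choose_eq_zero_of_lt (Nat.lt_succ_of_lt h)]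

theorem det_pascalMatrix : (pascalMatrix R k).det = 1 := by
  rw [det_of_isLowerTriangular]
  · simp [pascalMatrix]
  · intro i j hij
    have hij : (i : ℕ) < j := hij
    simp [pascalMatrix, Nat.choose_eq_zero_of_lt hij]

theorem transpose_upperBidiagonal_mul_pascalMatrix (c : R) :
    (upperBidiagonal k (fun i => c - i) fun i => i + 1)ᵀ * pascalMatrix R k
      = pascalMatrix R k * diagonal (fun i : Fin k => c - i) := by
  rw [← transpose_inj, transpose_mul, transpose_transpose]
  cases k with
  | zero => exact Subsingleton.elim _ _
  | succ k =>
    ext j i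
    rw [transpose_apply, mul_diagonal]
    cases i using Fin.cases with
    | zero =>
      rw [mul_upperBidiagonal_apply_zero]
      cases j using Fin.cases <;> simp [pascalMatrix]
    | succ i =>
      rw [mul_upperBidiagonal_apply_succ]
      cases j using Fin.cases with
      | zero => simp [pascalMatrix]
      | succ j =>
        simp only [pascalMatrix, transpose_apply, of_apply, Fin.val_succ, Fin.val_castSucc,
          Nat.choose_succ_succ', Nat.cast_add, Nat.cast_one]
        linear_combination natCast_choose_succ_mul (R := R) i j

theorem upperBidiagonal_mul_pascalMatrix (c : R) :
    upperBidiagonal k (fun i => c + i) (fun i => k - 1 - i) * pascalMatrix R k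
      = pascalMatrix R k
        * upperBidiagonal k (fun i => c + k - 1 - i) (fun i => k - 1 - i) := by
  cases k with
  | zero => exact Subsingleton.elim _ _
  | succ k =>
    ext i j
    rw [upperBidiagonal_mul_apply (f := fun i j => (i.choose j : R)) (by simp)
      (A := pascalMatrix R (k + 1)) fun _ _ => rfl]
    cases j using Fin.cases with
    | zero =>
      rw [mul_upperBidiagonal_apply_zero]
      simp only [pascalMatrix, of_apply, Fin.val_zero, Nat.choose_zero_right, Nat.cast_add,
        Nat.cast_one, Nat.cast_zero]
      ring
    | succ j =>
      rw [mul_upperBidiagonal_apply_succ]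
      simp only [pascalMatrix, of_apply, Fin.val_succ, Fin.val_castSucc, Nat.choose_succ_succ',
        Nat.cast_add, Nat.cast_one]
      linear_combination natCast_choose_succ_mul (R := R) i j

end Bidiagonal

section Symmetrization

open Matrix

theorem exists_diagonal_conj_gram_upperBidiagonal {K : Type*} [Field K] {k : ℕ}
    {d u p q p' q' : ℕ → K} (hd : ∀ i < k, d i ≠ 0) (hu : ∀ i, i + 1 < k → u i ≠ 0)
    (hp : ∀ i < k, d i ^ 2 = p i * p' i) (hq : ∀ i, i + 1 < k → u i ^ 2 = q i * q' i) :
    ∃ e : Fin k → K, (∀ i, e i ≠ 0) ∧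
      (upperBidiagonal k d u)ᵀ * upperBidiagonal k d u * diagonal e
        = diagonal e * ((upperBidiagonal k p q)ᵀ * upperBidiagonal k p' q') := by
  have hp0 : ∀ i < k, p i ≠ 0 := fun i hi =>
    left_ne_zero_of_mul (hp i hi ▸ pow_ne_zero 2 (hd i hi))
  have hq0 : ∀ i, i + 1 < k → q i ≠ 0 := fun i hi =>
    left_ne_zero_of_mul (hq i hi ▸ pow_ne_zero 2 (hu i hi))
  -- The ratios `f i / e i` and `e (i + 1) / e i` are forced by comparing entries in the two
  -- factorizations.
  let e : ℕ → K := fun i => ∏ j ∈ Finset.range i, u j * p j / (d j * q j)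
  let f : ℕ → K := fun i => e i * p i / d i
  have e_succ (i : ℕ) : e (i + 1) = e i * (u i * p i / (d i * q i)) :=
    Finset.prod_range_succ _ i
  have right_factor : upperBidiagonal k d u * diagonal (fun i : Fin k => e i)
      = diagonal (fun i : Fin k => f i) * upperBidiagonal k p' q' := by
    refine upperBidiagonal_mul_diagonal_eq_diagonal_mul (fun i hi => ?_) fun i hi => ?_
    · have := hd i hi
      simp only [f]
      field_simp
      linear_combination e i * hp i hi
    · have := hd i (by omega)
      have := hq0 i hi
      simp only [f, e_succ]
      field_simp
      linear_combination e i * p i * hq i hi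
  have left_factor : (upperBidiagonal k d u)ᵀ * diagonal (fun i : Fin k => f i)
      = diagonal (fun i : Fin k => e i) * (upperBidiagonal k p q)ᵀ := by
    rw [← transpose_inj, transpose_mul, transpose_mul, diagonal_transpose, diagonal_transpose,
      transpose_transpose, transpose_transpose]
    symm
    refine upperBidiagonal_mul_diagonal_eq_diagonal_mul (fun i hi => ?_) fun i hi => ?_
    · have := hd i hi
      simp only [f]
      field_simp
    · have := hd i (by omega)
      have := hq0 i hi
      simp only [f, e_succ]
      field_simp
  refine ⟨fun i => e i, fun i => Finset.prod_ne_zero_iff.mpr fun j hj => ?_, ?_⟩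
  · have hj : j < i := Finset.mem_range.mp hj
    have hjk : j + 1 < k := by omega
    exact div_ne_zero (mul_ne_zero (hu j hjk) (hp0 j (by omega)))
      (mul_ne_zero (hd j (by omega)) (hq0 j hjk))
  · rw [Matrix.mul_assoc, right_factor, ← Matrix.mul_assoc, left_factor, Matrix.mul_assoc]

end Symmetrization

section Overlap

open Matrix

/-- The weight `p` for which `1 - 2p` is the diagonal entry of `uAlpha N r k` at `(i, 0)`,
as a function of `S = N - r`. -/
noncomputable def alphaWeight (S : ℝ) (k i : ℕ) : ℝ :=
  (k - i) / S

/-- The weight `p` for which `1 - 2p` is the diagonal entry of `uBeta r k` at `(i, 0)`,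
as a function of `R = r + 1`. -/
noncomputable def betaWeight (R : ℝ) (i : ℕ) : ℝ :=
  i / R

/-- The overlap matrix `Wᵀ * V` of the vectors along which `u_β` and `u_α` reflect. -/
noncomputable def overlapMatrix (R S : ℝ) (k : ℕ) : Matrix (Fin k) (Fin k) ℝ :=
  upperBidiagonal k (fun i => √(1 - betaWeight R (i + 1)) * √(1 - alphaWeight S k i))
    fun i => √(betaWeight R (i + 1)) * √(alphaWeight S k (i + 1))

variable {R S : ℝ} {k : ℕ}

theorem betaWeight_succ_pos (hR : 0 < R) (i : ℕ) : 0 < betaWeight R (i + 1) :=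
  div_pos (mod_cast i.succ_pos) hR

theorem betaWeight_lt_one (hR : k < R) {i : ℕ} (hi : i ≤ k) : betaWeight R i < 1 := by
  have hik : (i : ℝ) ≤ k := mod_cast hi
  rw [betaWeight, div_lt_one (k.cast_nonneg.trans_lt hR)]
  exact hik.trans_lt hR

theorem alphaWeight_pos (hS : 0 < S) {i : ℕ} (hi : i < k) : 0 < alphaWeight S k i :=
  div_pos (sub_pos.mpr (mod_cast hi)) hS

theorem alphaWeight_lt_one (hS : k < S) (i : ℕ) : alphaWeight S k i < 1 := by
  have hS0 : 0 < S := k.cast_nonneg.trans_lt hS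
  rw [alphaWeight, div_lt_one hS0]
  exact (sub_le_self _ i.cast_nonneg).trans_lt hS

theorem upperBidiagonal_betaWeight (hR : R ≠ 0) :
    upperBidiagonal k (fun i => 1 - betaWeight R (i + 1)) (fun i => betaWeight R (i + 1))
      = R⁻¹ • upperBidiagonal k (fun i => R - 1 - i) fun i => i + 1 := by
  rw [smul_upperBidiagonal]
  refine upperBidiagonal_congr (fun i _ => ?_) fun i _ => ?_ <;> unfold betaWeight <;>
    push_cast <;> field_simp
  ring

theorem upperBidiagonal_alphaWeight (hS : S ≠ 0) :
    upperBidiagonal k (fun i => 1 - alphaWeight S k i) (fun i => alphaWeight S k (i + 1))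
      = S⁻¹ • upperBidiagonal k (fun i => S - k + i) fun i => k - 1 - i := by
  rw [smul_upperBidiagonal]
  refine upperBidiagonal_congr (fun i _ => ?_) fun i _ => ?_ <;> unfold alphaWeight <;>
    push_cast <;> field_simp <;> ring

theorem exists_diagonal_conj_gram_overlapMatrix (hR : k < R) (hS : k < S) :
    ∃ e : Fin k → ℝ, (∀ i, e i ≠ 0) ∧
      (overlapMatrix R S k)ᵀ * overlapMatrix R S k * diagonal e
        = diagonal e * ((R⁻¹ • upperBidiagonal k (fun i => R - 1 - i) fun i => (i : ℝ) + 1)ᵀ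
          * S⁻¹ • upperBidiagonal k (fun i => S - k + i) fun i => k - 1 - i) := by
  have hR0 : 0 < R := k.cast_nonneg.trans_lt hR
  have hS0 : 0 < S := k.cast_nonneg.trans_lt hS
  rw [← upperBidiagonal_betaWeight hR0.ne', ← upperBidiagonal_alphaWeight hS0.ne']
  have one_sub_b_pos {i : ℕ} (hi : i < k) := sub_pos.mpr (betaWeight_lt_one hR hi)
  have one_sub_a_pos (i : ℕ) := sub_pos.mpr (alphaWeight_lt_one hS i)
  have b_pos (i : ℕ) := betaWeight_succ_pos hR0 i
  have a_pos {i : ℕ} (hi : i < k) := alphaWeight_pos hS0 hi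
  refine exists_diagonal_conj_gram_upperBidiagonal (fun i hi => ?_) (fun i hi => ?_)
    (fun i hi => ?_) fun i hi => ?_
  · have := one_sub_b_pos hi
    have := one_sub_a_pos i
    positivity
  · have := b_pos i
    have := a_pos hi
    positivity
  · rw [mul_pow, Real.sq_sqrt (one_sub_b_pos hi).le, Real.sq_sqrt (one_sub_a_pos i).le]
  · rw [mul_pow, Real.sq_sqrt (b_pos i).le, Real.sq_sqrt (a_pos hi).le]

theorem det_smul_one_sub_smul_gram_overlapMatrix (hR : k < R) (hS : k < S) (a b : ℝ[X]) :
    (a • 1 - b • ((overlapMatrix R S k)ᵀ * overlapMatrix R S k).map C).det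
      = ∏ m : Fin k, (a - b * C ((R - 1 - m) * (S - 1 - m) / (R * S))) := by
  obtain ⟨e, he, hconj⟩ := exists_diagonal_conj_gram_overlapMatrix hR hS
  have triangularized : (overlapMatrix R S k)ᵀ * overlapMatrix R S k
        * (diagonal e * pascalMatrix ℝ k)
      = diagonal e * pascalMatrix ℝ k * ((S⁻¹ * R⁻¹) • (diagonal (fun i : Fin k => R - 1 - i)
        * upperBidiagonal k (fun i => S - k + k - 1 - i) fun i => k - 1 - i)) := by
    rw [← Matrix.mul_assoc, hconj, Matrix.mul_assoc, Matrix.mul_assoc]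
    simp only [transpose_smul, Matrix.smul_mul, Matrix.mul_smul, smul_smul]
    rw [Matrix.mul_assoc, upperBidiagonal_mul_pascalMatrix, ← Matrix.mul_assoc _ (pascalMatrix ℝ k),
      transpose_upperBidiagonal_mul_pascalMatrix, Matrix.mul_assoc (pascalMatrix ℝ k)]
  have det_ne_zero : (diagonal e * pascalMatrix ℝ k).det ≠ 0 := by
    rw [det_mul, det_pascalMatrix, mul_one, det_diagonal]
    exact Finset.prod_ne_zero_iff.mpr fun i _ => he i
  rw [det_smul_one_sub_smul_map_C_of_mul_eq triangularized det_ne_zero]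
  · refine Finset.prod_congr rfl fun m _ => ?_
    simp only [upperBidiagonal, sub_add_cancel, Matrix.smul_apply, diagonal_mul, of_apply,
      ↓reduceIte, smul_eq_mul]
    congr 3
    field_simp
  · intro i j hij
    simp [diagonal_mul, upperBidiagonal_isUpperTriangular _ _ hij]

end Overlap

section ReducedSpace

open Matrix

/-- The splitting of the reduced index set into the pairs `(i, 0)` with `i ≤ k` and the pairs
`(i, 1)` with `i < k`. -/
noncomputable def idxEquiv (k : ℕ) : Fin (k + 1) ⊕ Fin k ≃ Idx k where
  toFun := Sum.elim (fun i => ⟨(i, 0), by simp⟩) fun i => ⟨(i.castSucc, 1), by simp [i.2.ne]⟩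
  invFun q := if h : q.val.2 = 0 then .inl q.val.1 else
    .inr ⟨q.val.1, by have := q.2; omega⟩
  left_inv := by rintro (i | i) <;> rfl
  right_inv := by
    rintro ⟨⟨i, s⟩, h⟩
    fin_cases s <;> rfl

theorem idxEquiv_inl_val {k : ℕ} (i : Fin (k + 1)) : (idxEquiv k (.inl i)).val = (i, 0) :=
  rfl

theorem idxEquiv_inr_val {k : ℕ} (j : Fin k) : (idxEquiv k (.inr j)).val = (j.castSucc, 1) :=
  rfl

section PairVectors

variable {ι κ : Type*} [DecidableEq ι] [DecidableEq κ]

/-- The columns are the unit vectors `√q e_{g j} - √(1 - q) e_j` with `q = p (g j)`, each supported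
on one index of `ι` and one of `κ`. -/
noncomputable def pairVectors (g : κ → ι) (p : ι → ℝ) : Matrix (ι ⊕ κ) κ ℝ :=
  fromRows (of fun i j => if i = g j then √(p i) else 0) (-diagonal fun j => √(1 - p (g j)))

variable [Fintype κ] {g : κ → ι} {p : ι → ℝ}

theorem pairVectors_transpose_mul_self [Fintype ι] (hg : g.Injective)
    (hp : ∀ j, p (g j) ∈ Set.Icc 0 1) : (pairVectors g p)ᵀ * pairVectors g p = 1 := by
  have hp0 (j : κ) := (hp j).1
  have hp1 (j : κ) := (hp j).2
  ext i j
  rw [pairVectors, transpose_fromRows, fromCols_mul_fromRows]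
  rcases eq_or_ne i j with rfl | hij
  · simp [mul_apply, Real.mul_self_sqrt, hp0, hp1]
  · simp [mul_apply, hij, hij.symm, hg.eq_iff]

theorem projReflection_pairVectors (hg : g.Injective) (hp : ∀ j, p (g j) ∈ Set.Icc 0 1)
    (hp_range : ∀ i ∉ Set.range g, p i = 0) :
    projReflection (pairVectors g p) (pairVectors g p)ᵀ
      = fromBlocks (diagonal fun i => 1 - 2 * p i)
          (of fun i j => if i = g j then 2 * √(p i) * √(1 - p i) else 0)
          (of fun j i => if i = g j then 2 * √(p i) * √(1 - p i) else 0)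
          (diagonal fun j => -(1 - 2 * p (g j))) := by
  have hp0 (j : κ) := (hp j).1
  have hp1 (j : κ) := (hp j).2
  have gram_left : (of fun i j => if i = g j then √(p i) else 0)
      * (of fun i j => if i = g j then √(p i) else 0)ᵀ = diagonal p := by
    ext i i'
    rw [mul_apply]
    rcases eq_or_ne i i' with rfl | hne
    · by_cases hi : i ∈ Set.range g
      · obtain ⟨j, rfl⟩ := hi
        simp [hg.eq_iff, Real.mul_self_sqrt, hp0]
      · have hne (j : κ) : i ≠ g j := fun h => hi ⟨j, h.symm⟩
        simp [hne, hp_range i hi]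
    · rw [diagonal_apply_ne _ hne]
      refine Finset.sum_eq_zero fun j _ => ?_
      rcases eq_or_ne i (g j) with rfl | h
      · simp [hne.symm]
      · simp [h]
  have gram_right : diagonal (fun j => √(1 - p (g j))) * diagonal (fun j => √(1 - p (g j)))
      = diagonal fun j => 1 - p (g j) := by
    simp only [diagonal_mul_diagonal, Real.mul_self_sqrt, sub_nonneg, hp1]
  rw [projReflection, pairVectors, transpose_fromRows, fromRows_mul_fromCols, gram_left,
    transpose_neg, diagonal_transpose, neg_mul_neg, gram_right, ← fromBlocks_one,
    fromBlocks_smul, sub_eq_add_neg, fromBlocks_neg, fromBlocks_add]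
  congr 1 <;> ext x y
  · rcases eq_or_ne x y with rfl | hne
    · simp [sub_eq_add_neg]
    · simp [hne]
  · rcases eq_or_ne x (g y) with rfl | hne
    · simp [mul_assoc]
    · simp [hne]
  · rcases eq_or_ne y (g x) with rfl | hne
    · simp [mul_comm, mul_assoc]
    · simp [hne]
  · rcases eq_or_ne x y with rfl | hne
    · simp only [Matrix.add_apply, Matrix.neg_apply, Matrix.smul_apply, diagonal_apply_eq,
        one_apply_eq, smul_eq_mul]
      ring
    · simp [hne]

end PairVectors

/-- The vectors along which `uAlpha` reflects, in the coordinates given by `idxEquiv`. -/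
noncomputable def alphaVectors (S : ℝ) (k : ℕ) : Matrix (Fin (k + 1) ⊕ Fin k) (Fin k) ℝ :=
  pairVectors Fin.castSucc fun i => alphaWeight S k i

/-- The vectors along which `uBeta` reflects, in the coordinates given by `idxEquiv`. -/
noncomputable def betaVectors (R : ℝ) (k : ℕ) : Matrix (Fin (k + 1) ⊕ Fin k) (Fin k) ℝ :=
  pairVectors Fin.succ fun i => betaWeight R i

variable {N r k : ℕ}

theorem alphaWeight_mem_Icc {S : ℝ} (hS : k < S) {i : ℕ} (hi : i ≤ k) :
    alphaWeight S k i ∈ Set.Icc 0 1 :=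
  ⟨div_nonneg (sub_nonneg.mpr (mod_cast hi)) (k.cast_nonneg.trans hS.le),
    (alphaWeight_lt_one hS i).le⟩

theorem betaWeight_mem_Icc {R : ℝ} (hR : k < R) {i : ℕ} (hi : i ≤ k) :
    betaWeight R i ∈ Set.Icc 0 1 :=
  ⟨div_nonneg i.cast_nonneg (k.cast_nonneg.trans hR.le), (betaWeight_lt_one hR hi).le⟩

theorem alphaVectors_transpose_mul_self {S : ℝ} (hS : k < S) :
    (alphaVectors S k)ᵀ * alphaVectors S k = 1 :=
  pairVectors_transpose_mul_self (Fin.castSucc_injective k) fun j =>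
    alphaWeight_mem_Icc hS j.castSucc.is_le

theorem betaVectors_transpose_mul_self {R : ℝ} (hR : k < R) :
    (betaVectors R k)ᵀ * betaVectors R k = 1 :=
  pairVectors_transpose_mul_self (Fin.succ_injective k) fun j =>
    betaWeight_mem_Icc hR j.succ.is_le

theorem uAlpha_submatrix_idxEquiv (hkN : (k : ℝ) < N - r) :
    (uAlpha N r k).submatrix (idxEquiv k) (idxEquiv k)
      = projReflection (alphaVectors (N - r) k) (alphaVectors (N - r) k)ᵀ := by
  rw [alphaVectors, projReflection_pairVectors (Fin.castSucc_injective k)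
    fun j => alphaWeight_mem_Icc hkN j.castSucc.is_le]
  · ext (i | j) (i' | j')
    · rcases eq_or_ne i i' with rfl | hne
      · simp [uAlpha, idxEquiv_inl_val, alphaWeight, mul_div_assoc]
      · simp [uAlpha, idxEquiv_inl_val, hne, hne.symm]
    · rcases eq_or_ne i j'.castSucc with rfl | hne
      · simp [uAlpha, idxEquiv_inl_val, idxEquiv_inr_val, alphaWeight]
      · simp [uAlpha, idxEquiv_inl_val, idxEquiv_inr_val, hne, hne.symm]
    · simp [uAlpha, idxEquiv_inl_val, idxEquiv_inr_val, alphaWeight]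
    · rcases eq_or_ne j j' with rfl | hne
      · simp [uAlpha, idxEquiv_inr_val, alphaWeight, mul_div_assoc]
      · simp [uAlpha, idxEquiv_inr_val, hne, hne.symm]
  · intro i hi
    have last : i = Fin.last k := by_contra fun h => hi (Fin.exists_castSucc_eq.mpr h)
    simp [last, alphaWeight]

theorem uBeta_submatrix_idxEquiv (hkr : k ≤ r) :
    (uBeta r k).submatrix (idxEquiv k) (idxEquiv k)
      = projReflection (betaVectors (r + 1) k) (betaVectors (r + 1) k)ᵀ := by
  have hkR : (k : ℝ) < r + 1 := mod_cast Nat.lt_succ_of_le hkr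
  rw [betaVectors, projReflection_pairVectors (Fin.succ_injective k)
    fun j => betaWeight_mem_Icc hkR j.succ.is_le]
  · ext (i | j) (i' | j')
    · rcases eq_or_ne i i' with rfl | hne
      · simp [uBeta, idxEquiv_inl_val, betaWeight, mul_div_assoc]
      · simp [uBeta, idxEquiv_inl_val, hne, hne.symm]
    · rcases eq_or_ne i j'.succ with rfl | hne
      · simp [uBeta, idxEquiv_inl_val, idxEquiv_inr_val, betaWeight, -Real.sqrt_div]
      · have hval : (j' : ℤ) + 1 ≠ i := fun h => hne (Fin.ext (by simp; omega))
        simp [uBeta, idxEquiv_inl_val, idxEquiv_inr_val, hne, hval]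
    · rcases eq_or_ne i' j.succ with rfl | hne
      · simp [uBeta, idxEquiv_inl_val, idxEquiv_inr_val, betaWeight, -Real.sqrt_div]
      · have hval : (i' : ℤ) - 1 ≠ j := fun h => hne (Fin.ext (by simp; omega))
        simp [uBeta, idxEquiv_inl_val, idxEquiv_inr_val, hne, hval]
    · rcases eq_or_ne j j' with rfl | hne
      · simp [uBeta, idxEquiv_inr_val, betaWeight, mul_div_assoc]
      · simp [uBeta, idxEquiv_inr_val, hne, hne.symm]
  · intro i hi
    have zero : i = 0 := by_contra fun h => hi (Fin.exists_succ_eq.mpr h)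
    simp [zero, betaWeight]

theorem betaVectors_transpose_mul_alphaVectors (R S : ℝ) :
    (betaVectors R k)ᵀ * alphaVectors S k = overlapMatrix R S k := by
  rw [betaVectors, alphaVectors, pairVectors, pairVectors, transpose_fromRows,
    fromCols_mul_fromRows]
  ext i j
  have left_entry : ((of fun (i : Fin (k + 1)) j => if i = j.succ then √(betaWeight R i) else 0)ᵀ
      * of fun (i : Fin (k + 1)) j => if i = j.castSucc then √(alphaWeight S k i) else 0) i j
      = if (j : ℕ) = i + 1 then √(betaWeight R (i + 1)) * √(alphaWeight S k (i + 1)) else 0 := by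
    rw [mul_apply, Fintype.sum_eq_single i.succ]
    · simp [Fin.ext_iff, eq_comm]
    · intro l hl
      simp [hl]
  have right_entry : ((-diagonal fun j : Fin k => √(1 - betaWeight R j.succ))ᵀ
      * -diagonal fun j : Fin k => √(1 - alphaWeight S k j.castSucc)) i j
      = if j = i then √(1 - betaWeight R (i + 1)) * √(1 - alphaWeight S k i) else 0 := by
    rcases eq_or_ne i j with rfl | hne
    · simp
    · simp [hne, hne.symm]
  rw [Matrix.add_apply, left_entry, right_entry, overlapMatrix, upperBidiagonal, of_apply]
  split_ifs with h h'
  · omega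
  all_goals simp

theorem charpoly_uBeta_mul_uAlpha (hkr : k ≤ r) (hkN : (k : ℝ) < N - r) :
    (uBeta r k * uAlpha N r k).charpoly
      = (X - 1) * ∏ m ∈ Finset.range k, ((X + 1) ^ 2
        - 4 * X * C (((r : ℝ) - m) * (N - r - 1 - m) / ((r + 1) * (N - r)))) := by
  have hkR : (k : ℝ) < r + 1 := mod_cast Nat.lt_succ_of_le hkr
  have card_eq : Fintype.card (Fin (k + 1) ⊕ Fin k) = 2 * Fintype.card (Fin k) + 1 := by
    simp only [Fintype.card_sum, Fintype.card_fin]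
    ring
  have overlap := betaVectors_transpose_mul_alphaVectors (k := k) ((r : ℝ) + 1) (N - r)
  have overlap_transpose : (alphaVectors (N - r) k)ᵀ * betaVectors (r + 1) k
      = (overlapMatrix (r + 1) (N - r) k)ᵀ := by
    rw [← overlap, transpose_mul, transpose_transpose]
  rw [← charpoly_reindex (idxEquiv k).symm, reindex_apply, Equiv.symm_symm,
    ← submatrix_mul_equiv _ _ _ (idxEquiv k), uBeta_submatrix_idxEquiv hkr,
    uAlpha_submatrix_idxEquiv hkN,
    charpoly_projReflection_mul (alphaVectors_transpose_mul_self hkN)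
      (betaVectors_transpose_mul_self hkR) card_eq, overlap, overlap_transpose,
    det_smul_one_sub_smul_gram_overlapMatrix hkR hkN, pow_one, Finset.prod_range]
  simp only [add_sub_cancel_right]

theorem X_add_one_sq_sub_four_mul_X_mul_C (c : ℝ) :
    (X + 1) ^ 2 - 4 * X * C ((1 + c) / 2) = X ^ 2 - C (2 * c) * X + 1 := by
  have four_mul_C : (4 : ℝ[X]) * C ((1 + c) / 2) = 2 + C (2 * c) := by
    rw [← C_ofNat, ← C_ofNat, ← C_mul, ← C_add]
    congr 1
    ring
  linear_combination -X * four_mul_C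

end ReducedSpace

/-- The characteristic polynomial of `u = u_β u_α` is
`(λ - 1) ∏_{n=1}^{k} (λ² - 2λ cos φ_n + 1)` with
`cos φ_n = 1 - 2n(N - n + 1)/((r+1)(N-r))`. -/
theorem stmt14 (N r k : ℕ) (hk : 0 < k) (hkr : k ≤ r) (hkN : k < N - r) :
    (uBeta r k * uAlpha N r k).charpoly
      = (X - 1) * ∏ n ∈ Finset.Icc 1 k,
          (X ^ 2
            - C (2 * (1 - 2 * (n : ℝ) * ((N : ℝ) - n + 1) / (((r : ℝ) + 1) * ((N : ℝ) - r)))) * X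
            + 1) := by
  have hkN' : (k : ℝ) < N - r := by
    rw [← Nat.cast_sub (by omega)]
    exact mod_cast hkN
  have hS : (N : ℝ) - r ≠ 0 := (k.cast_nonneg.trans_lt hkN').ne'
  have hR : (r : ℝ) + 1 ≠ 0 := r.cast_add_one_ne_zero
  rw [charpoly_uBeta_mul_uAlpha hkr hkN', ← Finset.Ico_add_one_right_eq_Icc,
    Finset.prod_Ico_eq_prod_range, Nat.add_sub_cancel]
  congr 1
  refine Finset.prod_congr rfl fun m _ => ?_
  rw [← X_add_one_sq_sub_four_mul_X_mul_C]
  congr 3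
  field_simp
  push_cast
  ring
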